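/- Let S ⊆ V with |S| ≤ M − 1, let w^S be the minimizer of ℓ among weight vectors supported on S, and let j ∈ V \ S. Then the marginal decrease of the gradient-matching error satisfies E(S) − E(S∪{j}) ≥ ((∇ℓ(w^S))_j)² / (4(λ + M·G²)). -/

import Mathlib

open scoped BigOperators RealInnerProductSpace

/-- The regularized gradient-matching objective
`ℓ(w) = ‖∑ᵢ wᵢ gᵢ − b‖₂² + λ ∑ᵢ wᵢ²`. -/
noncomputable def ell {V : Type*} [Fintype V] {d : ℕ}
    (g : V → EuclideanSpace ℝ (Fin d)) (b : EuclideanSpace ℝ (Fin d))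
    (lam : ℝ) (w : V → ℝ) : ℝ :=
  ‖(∑ i, w i • g i) - b‖ ^ 2 + lam * ∑ i, (w i) ^ 2

/-- `E(S) = inf { ℓ(w) : w supported on S }`. -/
noncomputable def EErr {V : Type*} [Fintype V] {d : ℕ}
    (g : V → EuclideanSpace ℝ (Fin d)) (b : EuclideanSpace ℝ (Fin d))
    (lam : ℝ) (S : Finset V) : ℝ :=
  sInf {y | ∃ w : V → ℝ, (∀ i ∉ S, w i = 0) ∧ y = ell g b lam w}

/-- The gradient of `ℓ`: `(∇ℓ(u))ⱼ = 2⟨∑ᵢ uᵢ gᵢ − b, gⱼ⟩ + 2λ uⱼ`. -/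
noncomputable def gradEll {V : Type*} [Fintype V] {d : ℕ}
    (g : V → EuclideanSpace ℝ (Fin d)) (b : EuclideanSpace ℝ (Fin d))
    (lam : ℝ) (u : V → ℝ) (j : V) : ℝ :=
  2 * ⟪(∑ i, u i • g i) - b, g j⟫ + 2 * lam * u j

/-- The marginal decrease of the gradient-matching error when adding `j ∉ S`
satisfies `E(S) − E(S∪{j}) ≥ ((∇ℓ(w^S))ⱼ)² / (4(λ + M G²))`. -/
theorem marginal_decrease_lower_bound
    {V : Type*} [Fintype V] [DecidableEq V] {d : ℕ} (hd : 1 ≤ d)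
    (g : V → EuclideanSpace ℝ (Fin d)) (G : ℝ) (hG : ∀ i, ‖g i‖ ≤ G)
    (b : EuclideanSpace ℝ (Fin d)) (lam : ℝ) (hlam : 0 < lam)
    (M : ℕ) (hM : 0 < M)
    (S : Finset V) (hS : S.card ≤ M - 1)
    (wS : V → ℝ) (hwS_supp : ∀ i ∉ S, wS i = 0)
    (hwS_min : ∀ w' : V → ℝ, (∀ i ∉ S, w' i = 0) →
      ell g b lam wS ≤ ell g b lam w')
    (j : V) (hj : j ∉ S) :
    EErr g b lam S - EErr g b lam (S ∪ {j}) ≥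
      (gradEll g b lam wS j) ^ 2 / (4 * (lam + M * G ^ 2)) := by
  have hLpos : 0 < lam + M * G ^ 2 := by positivity
  have hS_eq : ell g b lam wS ≤ EErr g b lam S := by
    unfold EErr
    apply le_csInf
    · exact ⟨_, wS, hwS_supp, rfl⟩
    · rintro y ⟨w, hw, rfl⟩
      exact hwS_min w hw
  have key : ∀ t : ℝ, ell g b lam (fun i => wS i + if i = j then t else 0) =
      ell g b lam wS + t * gradEll g b lam wS j + t ^ 2 * (‖g j‖ ^ 2 + lam) := by
    intro t
    have h1 : (∑ i, (wS i + if i = j then t else 0) • g i) - b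
        = ((∑ i, wS i • g i) - b) + t • g j := by
      simp only [add_smul, Finset.sum_add_distrib, ite_smul, zero_smul, Finset.sum_ite_eq',
        Finset.mem_univ, if_true]
      abel
    have h2 : ∑ i, (wS i + if i = j then t else 0) ^ 2
        = (∑ i, (wS i) ^ 2) + (2 * t * wS j + t ^ 2) := by
      have : ∀ i, (wS i + if i = j then t else 0) ^ 2
          = (wS i) ^ 2 + if i = j then 2 * t * wS i + t ^ 2 else 0 := by
        intro i
        split_ifs <;> ring
      simp only [this, Finset.sum_add_distrib, Finset.sum_ite_eq', Finset.mem_univ, if_true]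
    unfold ell gradEll
    rw [h1, h2, norm_add_sq_real, inner_smul_right, norm_smul, mul_pow, Real.norm_eq_abs, sq_abs]
    ring
  have hup : ∀ t : ℝ, EErr g b lam (S ∪ {j}) ≤
      ell g b lam wS + t * gradEll g b lam wS j + t ^ 2 * (‖g j‖ ^ 2 + lam) := by
    intro t
    rw [← key t]
    unfold EErr
    apply csInf_le
    · refine ⟨0, ?_⟩
      rintro y ⟨w, -, rfl⟩
      unfold ell
      positivity
    · refine ⟨_, ?_, rfl⟩
      intro i hi
      simp only [Finset.mem_union, Finset.mem_singleton, not_or] at hi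
      simp [hwS_supp i hi.1, hi.2]
  have hgj : ‖g j‖ ^ 2 + lam ≤ lam + M * G ^ 2 := by
    have h1 : ‖g j‖ ^ 2 ≤ G ^ 2 := pow_le_pow_left₀ (norm_nonneg _) (hG j) 2
    have h2 : (1 : ℝ) ≤ M := by exact_mod_cast hM
    nlinarith [sq_nonneg G]
  generalize gradEll g b lam wS j = D at *
  generalize lam + M * G ^ 2 = L at *
  have h3 := hup (-D / (2 * L))
  have h4 := mul_le_mul_of_nonneg_left hgj (sq_nonneg (-D / (2 * L)))
  have h5 : -D / (2 * L) * D + (-D / (2 * L)) ^ 2 * L = - (D ^ 2 / (4 * L)) := by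
    field_simp
    ring
  linarith
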